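/- Let I^γ be a transport along a path γ : J → B in a fibre bundle π : E → B satisfying the uniqueness condition that I^γ_{r→s} = id whenever γ(r) = γ(s), r, s ∈ J. Then for any u, v ∈ π⁻¹(γ(J)), r ∈ q_γ(u), and s ∈ q_γ(v), the images of the liftings satisfy: either γ̄_{u,r}(J) ∩ γ̄_{v,s}(J) = ∅ or γ̄_{u,r}(J) = γ̄_{v,s}(J); i.e., two liftings of the same path either do not intersect or coincide as sets. -/

import Mathlib

/-- The fibre of `π : E → B` over the point `x : B`. -/
abbrev Fibre {E B : Type*} (π : E → B) (x : B) : Type _ := {e : E // π e = x}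

/-- The lifting `γ̄_{u,s₀}` of `γ` through `u` generated by the transport `I` along `γ`
with parameter `s₀ ∈ q_γ(u)`, given by `γ̄_{u,s₀}(s) := I^γ_{s₀→s}(u)`. -/
abbrev liftPt {E B : Type*} (π : E → B) {J : Set ℝ} {γ : J → B}
    (I : ∀ s t : J, Fibre π (γ s) → Fibre π (γ t))
    (u : E) (s₀ : J) (h : γ s₀ = π u) : J → E :=
  fun s => (I s₀ s ⟨u, h.symm⟩ : E)

section Lifting

variable {T E B : Type*} {π : E → B} {γ : T → B} {I : ∀ s t : T, Fibre π (γ s) → Fibre π (γ t)}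

/-- The lifting of `γ` generated by the transport `I` through a point `p` of the fibre over `γ s₀`,
with parameter `s₀`. This is `liftPt` with an arbitrary parameter type `T` in place of `J ⊆ ℝ`, and
with the point of `E` and the proof that it lies over `γ s₀` bundled into `p`. -/
abbrev lifting (I : ∀ s t : T, Fibre π (γ s) → Fibre π (γ t)) {s₀ : T} (p : Fibre π (γ s₀)) :
    T → E :=
  fun t => (I s₀ t p : E)

theorem Fibre.base_eq_of_coe_eq {x y : B} {p : Fibre π x} {q : Fibre π y} (h : (p : E) = q) :
    x = y :=
  calc
    x = π p := p.property.symm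
    _ = π q := congrArg π h
    _ = y := q.property

theorem lifting_transport (hcomp : ∀ r s t : T, I t r ∘ I s t = I s r) {s : T}
    (p : Fibre π (γ s)) (t : T) : lifting I (I s t p) = lifting I p :=
  funext fun r => congrArg Subtype.val (congrFun (hcomp r s t) p)

theorem lifting_eq_of_coe_eq (hcomp : ∀ r s t : T, I t r ∘ I s t = I s r)
    (huniq : ∀ r s : T, γ r = γ s → ∀ p : Fibre π (γ r), (I r s p : E) = p)
    {r s : T} {p : Fibre π (γ r)} {q : Fibre π (γ s)} (h : (p : E) = q) :
    lifting I p = lifting I q := by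
  have transport_eq : I r s p = q :=
    Subtype.ext ((huniq r s (Fibre.base_eq_of_coe_eq h) p).trans h)
  rw [← transport_eq, lifting_transport hcomp]

theorem lifting_eq_of_apply_eq (hcomp : ∀ r s t : T, I t r ∘ I s t = I s r)
    (huniq : ∀ r s : T, γ r = γ s → ∀ p : Fibre π (γ r), (I r s p : E) = p)
    {r s a b : T} {p : Fibre π (γ r)} {q : Fibre π (γ s)} (h : lifting I p a = lifting I q b) :
    lifting I p = lifting I q :=
  calc
    lifting I p = lifting I (I r a p) := (lifting_transport hcomp p a).symm
    _ = lifting I (I s b q) := lifting_eq_of_coe_eq hcomp huniq h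
    _ = lifting I q := lifting_transport hcomp q b

theorem liftings_disjoint_or_coincide_general (hcomp : ∀ r s t : T, I t r ∘ I s t = I s r)
    (huniq : ∀ r s : T, γ r = γ s → ∀ p : Fibre π (γ r), (I r s p : E) = p)
    {r s : T} (p : Fibre π (γ r)) (q : Fibre π (γ s)) :
    Disjoint (Set.range (lifting I p)) (Set.range (lifting I q)) ∨ lifting I p = lifting I q := by
  rw [or_iff_not_imp_left, Set.not_disjoint_iff]
  rintro ⟨_, ⟨a, ha⟩, ⟨b, hb⟩⟩
  exact lifting_eq_of_apply_eq hcomp huniq (ha.trans hb.symm)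

end Lifting

/-- Corollary 4.2: If the transport `I^γ` satisfies the uniqueness
condition `I^γ_{r→s} = id` whenever `γ(r) = γ(s)`, then any two liftings of `γ`
generated by `I^γ` either do not intersect or coincide as sets. -/
theorem liftings_disjoint_or_coincide
    {E B : Type*} (π : E → B) (J : Set ℝ) (hJ : J.OrdConnected) (γ : J → B)
    -- a transport along the path `γ`:
    (I : ∀ s t : J, Fibre π (γ s) → Fibre π (γ t))
    (hcomp : ∀ r s t : J, I t r ∘ I s t = I s r)
    (hid : ∀ s : J, I s s = id)
    -- the uniqueness condition (4.4):
    (huniq : ∀ (r s : J), γ r = γ s → ∀ v : Fibre π (γ r), (I r s v : E) = (v : E)) :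
    ∀ (u v : E) (r s : J) (hr : γ r = π u) (hs : γ s = π v),
      Set.range (liftPt π I u r hr) ∩ Set.range (liftPt π I v s hs) = ∅ ∨
      Set.range (liftPt π I u r hr) = Set.range (liftPt π I v s hs) := by
  intro u v r s hr hs
  exact (liftings_disjoint_or_coincide_general hcomp huniq ⟨u, hr.symm⟩ ⟨v, hs.symm⟩).imp
    Disjoint.inter_eq (congrArg Set.range)
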